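/- Assume n ≥ 3. For any X ∈ M_{−1,0}, the stabilizer {A ∈ G : A X = X} of X in G is isomorphic as a group to the semidirect product of the additive group ℝ^{n−1} by K = {B ∈ GL(n−1,ℝ) : B preserves the standard Euclidean inner product on ℝ^{n−1}, det B = 1}, where K acts on ℝ^{n−1} by the standard linear action. (This realizes the flat-model orbit Ti^n = M_{−1,0} as the homogeneous space ISO(1,n−1)/(ℝ^{n−1} ⋊ SO(n−1)).) -/

import Mathlib

def formSig (k m : ℕ) (x y : Fin m → ℝ) : ℝ :=
  ∑ i : Fin m, (if (i : ℕ) < k then -(x i * y i) else x i * y i)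

/-- The group of linear automorphisms of `ℝ^m` with determinant `1` preserving the
bilinear form `formSig k m` (of signature `(k, m-k)`), realized as a subgroup of the
group of invertible `m × m` real matrices. -/
def specialIsometry (k m : ℕ) : Subgroup (Matrix (Fin m) (Fin m) ℝ)ˣ where
  carrier := {A | ((A : Matrix (Fin m) (Fin m) ℝ)).det = 1 ∧
    ∀ x y : Fin m → ℝ,
      formSig k m ((A : Matrix (Fin m) (Fin m) ℝ).mulVec x)
        ((A : Matrix (Fin m) (Fin m) ℝ).mulVec y) = formSig k m x y}
  one_mem' := by
    refine ⟨by simp, fun x y => by simp⟩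
  mul_mem' := by
    intro a b ha hb
    obtain ⟨had, haf⟩ := ha
    obtain ⟨hbd, hbf⟩ := hb
    refine ⟨by rw [Units.val_mul, Matrix.det_mul, had, hbd, mul_one], fun x y => ?_⟩
    rw [Units.val_mul, ← Matrix.mulVec_mulVec, ← Matrix.mulVec_mulVec, haf, hbf]
  inv_mem' := by
    intro a ha
    obtain ⟨had, haf⟩ := ha
    have hinv : (↑a⁻¹ : Matrix (Fin m) (Fin m) ℝ) * (↑a : Matrix (Fin m) (Fin m) ℝ) = 1 := a.inv_mul
    refine ⟨?_, fun x y => ?_⟩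
    · have h := congrArg Matrix.det hinv
      rw [Matrix.det_mul, had, mul_one, Matrix.det_one] at h
      exact h
    · have hx : ∀ v : Fin m → ℝ,
          (↑a : Matrix (Fin m) (Fin m) ℝ).mulVec
            ((↑a⁻¹ : Matrix (Fin m) (Fin m) ℝ).mulVec v) = v := by
        intro v
        rw [Matrix.mulVec_mulVec, a.mul_inv, Matrix.one_mulVec]
      calc formSig k m ((↑a⁻¹ : Matrix (Fin m) (Fin m) ℝ).mulVec x)
              ((↑a⁻¹ : Matrix (Fin m) (Fin m) ℝ).mulVec y)
          = formSig k m
              ((↑a : Matrix (Fin m) (Fin m) ℝ).mulVec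
                ((↑a⁻¹ : Matrix (Fin m) (Fin m) ℝ).mulVec x))
              ((↑a : Matrix (Fin m) (Fin m) ℝ).mulVec
                ((↑a⁻¹ : Matrix (Fin m) (Fin m) ℝ).mulVec y)) := (haf _ _).symm
        _ = formSig k m x y := by rw [hx, hx]

/-- The subgroup of invertible `m × m` real matrices fixing a given vector `v`. -/
def vecStab (m : ℕ) (v : Fin m → ℝ) : Subgroup (Matrix (Fin m) (Fin m) ℝ)ˣ where
  carrier := {A | (A : Matrix (Fin m) (Fin m) ℝ).mulVec v = v}
  one_mem' := by simp
  mul_mem' := by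
    intro a b ha hb
    show ((a * b : (Matrix (Fin m) (Fin m) ℝ)ˣ) : Matrix (Fin m) (Fin m) ℝ).mulVec v = v
    rw [Units.val_mul, ← Matrix.mulVec_mulVec, hb, ha]
  inv_mem' := by
    intro a ha
    show ((a⁻¹ : (Matrix (Fin m) (Fin m) ℝ)ˣ) : Matrix (Fin m) (Fin m) ℝ).mulVec v = v
    conv_lhs => rw [← ha]
    rw [Matrix.mulVec_mulVec, a.inv_mul, Matrix.one_mulVec]

/-- The 'Poincaré subgroup' of `SL(n+2,ℝ)` determined by the signature `(2,n)` form
`formSig 2 (n+2)` and the null vector `I`. -/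
def poincareGroup (n : ℕ) (I : Fin (n + 2) → ℝ) :
    Subgroup (Matrix (Fin (n + 2)) (Fin (n + 2)) ℝ)ˣ :=
  specialIsometry 2 (n + 2) ⊓ vecStab (n + 2) I

/-- The multiplicative automorphism of `Multiplicative ℝ^m` induced by an invertible
matrix acting by matrix–vector multiplication. -/
def mulVecMulAut {m : ℕ} (A : (Matrix (Fin m) (Fin m) ℝ)ˣ) :
    Multiplicative (Fin m → ℝ) ≃* Multiplicative (Fin m → ℝ) where
  toFun v := Multiplicative.ofAdd
    ((A : Matrix (Fin m) (Fin m) ℝ).mulVec (Multiplicative.toAdd v))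
  invFun v := Multiplicative.ofAdd
    ((↑A⁻¹ : Matrix (Fin m) (Fin m) ℝ).mulVec (Multiplicative.toAdd v))
  left_inv v := by
    simp only [toAdd_ofAdd, Matrix.mulVec_mulVec, Units.inv_mul, Matrix.one_mulVec,
      ofAdd_toAdd]
  right_inv v := by
    simp only [toAdd_ofAdd, Matrix.mulVec_mulVec, Units.mul_inv, Matrix.one_mulVec,
      ofAdd_toAdd]
  map_mul' u v := by
    simp only [toAdd_mul, Matrix.mulVec_add, ofAdd_add]

/-- A subgroup of invertible `m × m` real matrices acts on the (additive, written
multiplicatively) translation group `ℝ^m` by matrix–vector multiplication. -/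
def subgroupMulVecHom {m : ℕ} (S : Subgroup (Matrix (Fin m) (Fin m) ℝ)ˣ) :
    S →* MulAut (Multiplicative (Fin m → ℝ)) where
  toFun A := mulVecMulAut (A : (Matrix (Fin m) (Fin m) ℝ)ˣ)
  map_one' := by
    ext v
    simp [mulVecMulAut]
  map_mul' a b := by
    ext v
    simp [mulVecMulAut, MulAut.mul_apply, Matrix.mulVec_mulVec]

/-- The set `M_{λ,s} = {X : Φ(X,X) = λ, Φ(I,X) = s, X ∉ ℝ·I}`. -/
def Mset (n : ℕ) (I : Fin (n + 2) → ℝ) (lam s : ℝ) : Set (Fin (n + 2) → ℝ) :=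
  {X | formSig 2 (n + 2) X X = lam ∧ formSig 2 (n + 2) I X = s ∧ ¬ ∃ c : ℝ, X = c • I}

/-!
The vectors `X` and `I` are orthogonal, `X` is anisotropic and `I` is isotropic, so `I` extends to
a hyperbolic pair `I`, `J` orthogonal to `X`, and the space splits as the orthogonal sum of the line
of `X`, the plane of `I` and `J`, and a complement `E`. The first two summands contribute two
negative squares, so by Sylvester's law of inertia `E` has two fewer of them than the whole space;
in signature `(2, n)` it is Euclidean.

In these coordinates, an isometry `S` fixing `X` and `I` is determined by the component `v` of `S J`
in `E` and by the isometry `g` that `S` induces on `I^⊥ ∩ X^⊥` modulo `I`. It is the Siegel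
transformation `T(v, g)`, and conversely each `T(v, g)` is such an isometry. The composition law
`T(v, g) T(w, h) = T(v + g w, g h)` and `det T(v, g) = det g` give the semidirect product.
-/

section HyperbolicSum

variable {R E F : Type*} [CommRing R] [AddCommGroup E] [Module R E] [AddCommGroup F] [Module R F]

/-- The orthogonal sum `⟨c⟩ ⊥ H ⊥ b` of a line, a hyperbolic plane and `b`. The isotropic basis
vectors of the plane are placed in the second and fourth coordinates, so that the stabilizer of
the first of them acts by block triangular maps. -/
def hyperbolicSum (c : R) (b : LinearMap.BilinForm R E) :
    LinearMap.BilinForm R (R × R × E × R) :=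
  let p₁ := LinearMap.fst R R (R × E × R)
  let p₂ := LinearMap.fst R R (E × R) ∘ₗ LinearMap.snd R R (R × E × R)
  let p₃ := LinearMap.fst R E R ∘ₗ LinearMap.snd R R (E × R) ∘ₗ LinearMap.snd R R (R × E × R)
  let p₄ := LinearMap.snd R E R ∘ₗ LinearMap.snd R R (E × R) ∘ₗ LinearMap.snd R R (R × E × R)
  c • LinearMap.BilinForm.linMulLin p₁ p₁ + LinearMap.BilinForm.linMulLin p₂ p₄ +
    LinearMap.BilinForm.linMulLin p₄ p₂ + b.comp p₃ p₃

theorem hyperbolicSum_apply (c : R) (b : LinearMap.BilinForm R E) (x y : R × R × E × R) :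
    hyperbolicSum c b x y =
      c * (x.1 * y.1) + x.2.1 * y.2.2.2 + x.2.2.2 * y.2.1 + b x.2.2.1 y.2.2.1 :=
  rfl

theorem separatingLeft_of_hyperbolicSum {c : R} {b : LinearMap.BilinForm R E}
    (h : (hyperbolicSum c b).SeparatingLeft) : b.SeparatingLeft := by
  intro u hu
  have key : ((0, 0, u, 0) : R × R × E × R) = 0 :=
    h _ fun y ↦ by simp [hyperbolicSum_apply, hu]
  simpa using key

/-- The isometry of hyperbolic sums that is `e` on the third summand and the identity on the
others. -/
def hyperbolicSumCongr (c : R) {b : LinearMap.BilinForm R E} {b' : LinearMap.BilinForm R F}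
    (e : b.IsometryEquiv b') : (hyperbolicSum c b).IsometryEquiv (hyperbolicSum c b') where
  toLinearEquiv := (LinearEquiv.refl R R).prodCongr <|
    (LinearEquiv.refl R R).prodCongr <| e.toLinearEquiv.prodCongr (LinearEquiv.refl R R)
  map_app' x y := by simp [hyperbolicSum_apply]

end HyperbolicSum

section SiegelMap

variable {R E : Type*} [CommRing R] [Invertible (2 : R)] [AddCommGroup E] [Module R E]
  {b : LinearMap.BilinForm R E}

/-- The Siegel (or Eichler) transformation with translation part `v` and linear part `g`. For
`b`-orthogonal `g` it is an isometry of `hyperbolicSum c b`, for every `c`, fixing the first two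
basis vectors. -/
def siegelMap (b : LinearMap.BilinForm R E) (v : E) (g : Module.End R E) :
    Module.End R (R × R × E × R) where
  toFun x := (x.1, x.2.1 - b v (g x.2.2.1) - ⅟2 * b v v * x.2.2.2,
    g x.2.2.1 + x.2.2.2 • v, x.2.2.2)
  map_add' x y := by
    simp only [Prod.fst_add, Prod.snd_add, map_add, add_smul, Prod.mk_add_mk, Prod.mk.injEq,
      true_and, and_true]
    exact ⟨by ring, by abel⟩
  map_smul' r x := by
    simp only [Prod.smul_fst, Prod.smul_snd, map_smul, Prod.smul_mk, Prod.mk.injEq, true_and,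
      and_true, smul_eq_mul, RingHom.id_apply, smul_add, mul_smul]
    ring

theorem siegelMap_apply (v : E) (g : Module.End R E) (x : R × R × E × R) :
    siegelMap b v g x = (x.1, x.2.1 - b v (g x.2.2.1) - ⅟2 * b v v * x.2.2.2,
      g x.2.2.1 + x.2.2.2 • v, x.2.2.2) :=
  rfl

theorem siegelMap_zero_one : siegelMap b 0 1 = 1 := by
  ext <;> simp [siegelMap_apply]

theorem siegelMap_mul (hb : b.IsSymm) (v w : E) {g : Module.End R E} (hg : b.IsOrthogonal g)
    (h : Module.End R E) :
    siegelMap b v g * siegelMap b w h = siegelMap b (v + g w) (g * h) := by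
  refine LinearMap.ext fun x ↦ ?_
  simp only [Module.End.mul_apply, siegelMap_apply, map_add, map_smul, LinearMap.add_apply,
    hg w, smul_eq_mul, Prod.mk.injEq, true_and, and_true]
  have hsymm : b (g w) v = b v (g w) := hb.eq _ _
  refine ⟨?_, by module⟩
  linear_combination (x.2.2.2 * b v (g w)) * invOf_mul_self (2 : R) + ⅟2 * x.2.2.2 * hsymm

theorem isOrthogonal_siegelMap (hb : b.IsSymm) (c : R) (v : E) {g : Module.End R E}
    (hg : b.IsOrthogonal g) : (hyperbolicSum c b).IsOrthogonal (siegelMap b v g) := by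
  intro x y
  simp only [hyperbolicSum_apply, siegelMap_apply, map_add, map_smul, LinearMap.add_apply,
    LinearMap.smul_apply, smul_eq_mul, hg x.2.2.1]
  have hsymm : b (g x.2.2.1) v = b v (g x.2.2.1) := hb.eq _ _
  linear_combination
    (-x.2.2.2 * y.2.2.2 * b v v) * invOf_mul_self (2 : R) + y.2.2.2 * hsymm

theorem det_siegelMap_zero [Module.Free R E] [Module.Finite R E] (g : Module.End R E) :
    LinearMap.det (siegelMap b 0 g) = LinearMap.det g := by
  have hprod : siegelMap b 0 g =
      LinearMap.prodMap LinearMap.id (LinearMap.prodMap LinearMap.id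
        (LinearMap.prodMap g LinearMap.id)) := by
    refine LinearMap.ext fun x ↦ ?_
    simp [siegelMap_apply]
  simp [hprod, LinearMap.det_prodMap]

theorem det_siegelMap_one (hb : b.IsSymm) (v : E) :
    LinearMap.det (siegelMap b v 1) = 1 := by
  have h_one : b.IsOrthogonal (1 : Module.End R E) := fun _ _ ↦ rfl
  have h_neg : b.IsOrthogonal (-1 : Module.End R E) := fun _ _ ↦ by simp
  have hadd (u w : E) : LinearMap.det (siegelMap b (u + w) 1) =
      LinearMap.det (siegelMap b u 1) * LinearMap.det (siegelMap b w 1) := by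
    rw [← map_mul, siegelMap_mul hb u w h_one]
    simp
  -- conjugation by `-1` inverts the translation part
  have hneg (u : E) : LinearMap.det (siegelMap b (-u) 1) = LinearMap.det (siegelMap b u 1) := by
    have hconj : siegelMap b (-u) 1 * siegelMap b 0 (-1) =
        siegelMap b 0 (-1) * siegelMap b u 1 := by
      rw [siegelMap_mul hb _ _ h_one, siegelMap_mul hb _ _ h_neg]
      simp
    have hunit : IsUnit (LinearMap.det (siegelMap b 0 (-1))) := by
      refine IsUnit.of_mul_eq_one (LinearMap.det (siegelMap b 0 (-1))) ?_
      rw [← map_mul, siegelMap_mul hb _ _ h_neg]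
      simp [siegelMap_zero_one]
    rw [← hunit.mul_left_inj, ← map_mul, hconj, map_mul, mul_comm]
  calc LinearMap.det (siegelMap b v 1)
      = LinearMap.det (siegelMap b ((⅟2 : R) • v + (⅟2 : R) • v) 1) := by
        rw [← add_smul, invOf_two_add_invOf_two, one_smul]
    _ = LinearMap.det (siegelMap b (-((⅟2 : R) • v) + (⅟2 : R) • v) 1) := by
        rw [hadd, hadd, hneg]
    _ = 1 := by rw [neg_add_cancel, siegelMap_zero_one, map_one]

theorem det_siegelMap [Module.Free R E] [Module.Finite R E] (hb : b.IsSymm) (v : E)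
    (g : Module.End R E) : LinearMap.det (siegelMap b v g) = LinearMap.det g := by
  have hfactor : siegelMap b v g = siegelMap b v 1 * siegelMap b 0 g := by
    rw [siegelMap_mul hb v 0 (fun _ _ ↦ rfl), map_zero, add_zero, one_mul]
  rw [hfactor, map_mul, det_siegelMap_one hb, one_mul, det_siegelMap_zero]

theorem siegelMap_inj {v w : E} {g h : Module.End R E} :
    siegelMap b v g = siegelMap b w h ↔ v = w ∧ g = h := by
  refine ⟨fun heq ↦ ⟨?_, LinearMap.ext fun u ↦ ?_⟩, by rintro ⟨rfl, rfl⟩; rfl⟩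
  · simpa [siegelMap_apply] using
      congrArg (fun x ↦ x.2.2.1) (LinearMap.congr_fun heq (0, 0, 0, 1))
  · simpa [siegelMap_apply] using
      congrArg (fun x ↦ x.2.2.1) (LinearMap.congr_fun heq (0, 0, u, 0))

theorem exists_eq_siegelMap {c : R} (hc : IsLeftRegular c)
    {S : Module.End R (R × R × E × R)} (hS : (hyperbolicSum c b).IsOrthogonal S)
    (hfix₁ : S (1, 0, 0, 0) = (1, 0, 0, 0)) (hfix₂ : S (0, 1, 0, 0) = (0, 1, 0, 0)) :
    ∃ (v : E) (g : Module.End R E), b.IsOrthogonal g ∧ S = siegelMap b v g := by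
  have hfst (x) : (S x).1 = x.1 := hc (by
    simpa [hfix₁, hyperbolicSum_apply] using hS x (1, 0, 0, 0))
  have hlast (x) : (S x).2.2.2 = x.2.2.2 := by
    simpa [hfix₂, hyperbolicSum_apply] using hS x (0, 1, 0, 0)
  let ι : E →ₗ[R] R × R × E × R :=
    LinearMap.inr R R _ ∘ₗ LinearMap.inr R R _ ∘ₗ LinearMap.inl R E R
  let π : R × R × E × R →ₗ[R] E :=
    LinearMap.fst R E R ∘ₗ LinearMap.snd R R _ ∘ₗ LinearMap.snd R R _
  let g : Module.End R E := π ∘ₗ S ∘ₗ ι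
  let v : E := (S (0, 0, 0, 1)).2.2.1
  have hgS (u : E) : g u = (S (0, 0, u, 0)).2.2.1 := rfl
  refine ⟨v, g, fun u w ↦ ?_, LinearMap.ext fun x ↦ ?_⟩
  · simpa [hgS, hyperbolicSum_apply, hfst, hlast] using hS (0, 0, u, 0) (0, 0, w, 0)
  -- the second coordinates are read off from the pairings with `S (0, 0, 0, 1)`
  have hsnd_last : 2 * (S (0, 0, 0, 1)).2.1 + b v v = 0 := by
    have hself : (S (0, 0, 0, 1)).2.1 + (S (0, 0, 0, 1)).2.1 + b v v = 0 := by
      simpa [v, hyperbolicSum_apply, hfst, hlast] using hS (0, 0, 0, 1) (0, 0, 0, 1)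
    rw [two_mul, hself]
  have hsnd (u : E) : (S (0, 0, u, 0)).2.1 + b v (g u) = 0 := by
    simpa [hgS, v, hyperbolicSum_apply, hfst, hlast] using hS (0, 0, 0, 1) (0, 0, u, 0)
  have hx : x = x.1 • ((1, 0, 0, 0) : R × R × E × R) + x.2.1 • ((0, 1, 0, 0) : R × R × E × R) +
      (0, 0, x.2.2.1, 0) + x.2.2.2 • ((0, 0, 0, 1) : R × R × E × R) := by
    simp
  have hSx : S x = x.1 • ((1, 0, 0, 0) : R × R × E × R) + x.2.1 • ((0, 1, 0, 0) : R × R × E × R) +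
      S (0, 0, x.2.2.1, 0) + x.2.2.2 • S (0, 0, 0, 1) := by
    conv_lhs => rw [hx]
    simp only [map_add, map_smul, hfix₁, hfix₂]
  refine Prod.ext (hfst x) (Prod.ext ?_ (Prod.ext ?_ (hlast x)))
  · simp only [hSx, siegelMap_apply, Prod.snd_add, Prod.fst_add, Prod.smul_snd, Prod.smul_fst,
      smul_eq_mul, mul_zero, mul_one, zero_add]
    linear_combination hsnd x.2.2.1 + ⅟2 * x.2.2.2 * hsnd_last -
      x.2.2.2 * (S (0, 0, 0, 1)).2.1 * invOf_mul_self (2 : R)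
  · simp [hSx, siegelMap_apply, hgS, v]

end SiegelMap

section WittFrame

variable {K V : Type*} [Field K] [AddCommGroup V] [Module K V]

/-- `X` is an anisotropic vector, and `I`, `J` is a hyperbolic pair orthogonal to `X`. Such a frame
splits the space as a `hyperbolicSum`. -/
structure IsWittFrame (Φ : LinearMap.BilinForm K V) (X I J : V) : Prop where
  anisotropic : Φ X X ≠ 0
  isotropic_left : Φ I I = 0
  isotropic_right : Φ J J = 0
  pairing : Φ I J = 1
  orthogonal_left : Φ X I = 0
  orthogonal_right : Φ X J = 0

theorem exists_isWittFrame [NeZero (2 : K)] {Φ : LinearMap.BilinForm K V} (hΦ : Φ.IsSymm)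
    (hsep : Φ.SeparatingLeft) {X I : V} (hXX : Φ X X ≠ 0) (hI : I ≠ 0) (hII : Φ I I = 0)
    (hXI : Φ X I = 0) : ∃ J, IsWittFrame Φ X I J := by
  obtain ⟨y, hy⟩ : ∃ y, Φ I y ≠ 0 := by
    by_contra! h
    exact hI (hsep I h)
  have hIX : Φ I X = 0 := by rw [hΦ.eq, hXI]
  set z : V := (Φ I y)⁻¹ • (y - (Φ X y / Φ X X) • X)
  have hXz : Φ X z = 0 := by simp [z, hXX]
  have hIz : Φ I z = 1 := by simp [z, hIX, hy]
  have hzI : Φ z I = 1 := by rw [hΦ.eq, hIz]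
  exact ⟨z - (Φ z z / 2) • I, {
    anisotropic := hXX
    isotropic_left := hII
    isotropic_right := by
      simp only [map_sub, map_smul, LinearMap.sub_apply, LinearMap.smul_apply, smul_eq_mul, hIz,
        hzI, hII]
      linear_combination (-Φ z z) * div_self (two_ne_zero (α := K))
    pairing := by simp [hIz, hII]
    orthogonal_left := hXI
    orthogonal_right := by simp [hXz, hXI] }⟩

/-- The orthogonal complement of the span of a Witt frame. -/
def wittComplement (Φ : LinearMap.BilinForm K V) (X I J : V) : Submodule K V :=
  (Φ X).ker ⊓ (Φ I).ker ⊓ (Φ J).ker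

theorem mem_wittComplement {Φ : LinearMap.BilinForm K V} {X I J u : V} :
    u ∈ wittComplement Φ X I J ↔ Φ X u = 0 ∧ Φ I u = 0 ∧ Φ J u = 0 := by
  simp [wittComplement, and_assoc]

/-- The parametrization of `V` by coordinates with respect to a Witt frame and its orthogonal
complement, ordered as in `hyperbolicSum`. -/
def wittFrameMap (Φ : LinearMap.BilinForm K V) (X I J : V) :
    K × K × wittComplement Φ X I J × K →ₗ[K] V where
  toFun x := x.1 • X + x.2.1 • I + (x.2.2.1 : V) + x.2.2.2 • J
  map_add' x y := by
    simp only [Prod.fst_add, Prod.snd_add, Submodule.coe_add]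
    module
  map_smul' r x := by
    simp only [Prod.smul_fst, Prod.smul_snd, Submodule.coe_smul, smul_eq_mul, RingHom.id_apply]
    module

theorem wittFrameMap_apply (Φ : LinearMap.BilinForm K V) (X I J : V)
    (x : K × K × wittComplement Φ X I J × K) :
    wittFrameMap Φ X I J x = x.1 • X + x.2.1 • I + (x.2.2.1 : V) + x.2.2.2 • J :=
  rfl

namespace IsWittFrame

variable {Φ : LinearMap.BilinForm K V} {X I J : V}

theorem apply_wittFrameMap (h : IsWittFrame Φ X I J) (hΦ : Φ.IsSymm)
    (x y : K × K × wittComplement Φ X I J × K) :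
    Φ (wittFrameMap Φ X I J x) (wittFrameMap Φ X I J y) =
      hyperbolicSum (Φ X X) (Φ.restrict (wittComplement Φ X I J)) x y := by
  obtain ⟨hXx, hIx, hJx⟩ := mem_wittComplement.1 x.2.2.1.2
  obtain ⟨hXy, hIy, hJy⟩ := mem_wittComplement.1 y.2.2.1.2
  rw [← hΦ.eq] at hXx hIx hJx
  simp only [wittFrameMap_apply, hyperbolicSum_apply, LinearMap.BilinForm.restrict_apply,
    LinearMap.domRestrict_apply, map_add, map_smul, LinearMap.add_apply, LinearMap.smul_apply,
    smul_eq_mul, h.isotropic_left, h.isotropic_right, h.pairing, h.orthogonal_left,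
    h.orthogonal_right, hΦ.eq I X, hΦ.eq J X, hΦ.eq J I, hXx, hIx, hJx, hXy, hIy, hJy]
  ring

/-- The coordinates with respect to a Witt frame, as an isometry. -/
def isometryEquiv (h : IsWittFrame Φ X I J) (hΦ : Φ.IsSymm) :
    (hyperbolicSum (Φ X X) (Φ.restrict (wittComplement Φ X I J))).IsometryEquiv Φ where
  __ := wittFrameMap Φ X I J
  invFun w := (Φ X w / Φ X X, Φ J w,
    ⟨w - (Φ X w / Φ X X) • X - Φ J w • I - Φ I w • J, by
      simp [mem_wittComplement, h.isotropic_left, h.isotropic_right, h.pairing, h.orthogonal_left,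
        h.orthogonal_right, hΦ.eq I X, hΦ.eq J X, hΦ.eq J I, h.anisotropic]⟩, Φ I w)
  left_inv x := by
    have hX : Φ X (wittFrameMap Φ X I J x) / Φ X X = x.1 := by
      rw [div_eq_iff h.anisotropic, mul_comm]
      simpa [wittFrameMap_apply, hyperbolicSum_apply] using
        h.apply_wittFrameMap hΦ (1, 0, 0, 0) x
    have hI : Φ I (wittFrameMap Φ X I J x) = x.2.2.2 := by
      simpa [wittFrameMap_apply, hyperbolicSum_apply] using
        h.apply_wittFrameMap hΦ (0, 1, 0, 0) x
    have hJ : Φ J (wittFrameMap Φ X I J x) = x.2.1 := by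
      simpa [wittFrameMap_apply, hyperbolicSum_apply] using
        h.apply_wittFrameMap hΦ (0, 0, 0, 1) x
    refine Prod.ext hX (Prod.ext hJ (Prod.ext (Subtype.ext ?_) hI))
    simp only [AddHom.toFun_eq_coe, LinearMap.coe_toAddHom, hX, hI, hJ]
    rw [wittFrameMap_apply]
    abel
  right_inv w := by
    simp only [AddHom.toFun_eq_coe, LinearMap.coe_toAddHom, wittFrameMap_apply]
    abel
  map_app' x y := h.apply_wittFrameMap hΦ x y

end IsWittFrame

end WittFrame

section QuadraticIsometry

variable {R V W : Type*} [CommSemiring R] [AddCommMonoid V] [Module R V] [AddCommMonoid W]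
  [Module R W]

theorem separatingLeft_of_isometryEquiv {b : LinearMap.BilinForm R V}
    {b' : LinearMap.BilinForm R W} (e : b.IsometryEquiv b') (hb' : b'.SeparatingLeft) :
    b.SeparatingLeft := by
  intro x hx
  refine (LinearEquiv.map_eq_zero_iff e.toLinearEquiv).1 (hb' _ fun y ↦ ?_)
  obtain ⟨z, rfl⟩ := e.toLinearEquiv.surjective y
  exact (e.map_app' x z).trans (hx z)

theorem equivalent_toQuadraticMap_of_isometryEquiv {b : LinearMap.BilinForm R V}
    {b' : LinearMap.BilinForm R W} (e : b.IsometryEquiv b') :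
    b.toQuadraticMap.Equivalent b'.toQuadraticMap :=
  ⟨{ e.toLinearEquiv with map_app' := fun x ↦ e.map_app' x x }⟩

variable {ι κ : Type*} [Fintype ι] [Fintype κ]

theorem weightedSumSquares_sumElim_equivalent_prod (v : ι → R) (w : κ → R) :
    (QuadraticMap.weightedSumSquares R (Sum.elim v w)).Equivalent
      ((QuadraticMap.weightedSumSquares R v).prod (QuadraticMap.weightedSumSquares R w)) :=
  ⟨{ LinearEquiv.sumArrowLequivProdArrow ι κ R R with
      map_app' := fun x ↦ by
        simp [QuadraticMap.weightedSumSquares_apply, LinearEquiv.sumArrowLequivProdArrow,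
          Equiv.sumArrowEquivProdArrow] }⟩

theorem weightedSumSquares_equivalent_comp_equiv (w : κ → R) (e : ι ≃ κ) :
    (QuadraticMap.weightedSumSquares R w).Equivalent
      (QuadraticMap.weightedSumSquares R (w ∘ e)) :=
  ⟨{ LinearEquiv.funCongrLeft R R e with
      map_app' := fun x ↦ by
        simpa [QuadraticMap.weightedSumSquares_apply, LinearEquiv.funCongrLeft] using
          e.sum_comp fun i ↦ w i * (x i * x i) }⟩

theorem nonempty_isometryEquiv_of_equivalent_toQuadraticMap {R V W : Type*}
    [CommRing R] [Invertible (2 : R)] [AddCommGroup V] [Module R V] [AddCommGroup W] [Module R W]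
    {b : LinearMap.BilinForm R V} {b' : LinearMap.BilinForm R W} (hb : b.IsSymm) (hb' : b'.IsSymm)
    (h : b.toQuadraticMap.Equivalent b'.toQuadraticMap) : Nonempty (b.IsometryEquiv b') := by
  obtain ⟨e⟩ := h
  refine ⟨{ e.toLinearEquiv with map_app' := fun x y ↦ ?_ }⟩
  have hpolar : QuadraticMap.polar b'.toQuadraticMap (e x) (e y) =
      QuadraticMap.polar b.toQuadraticMap x y := by
    simp only [QuadraticMap.polar, ← map_add, e.map_app]
  rw [LinearMap.BilinMap.polar_toQuadraticMap, LinearMap.BilinMap.polar_toQuadraticMap,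
    hb'.eq (e y), hb.eq y, ← two_mul, ← two_mul] at hpolar
  exact (isUnit_of_invertible (2 : R)).mul_left_cancel hpolar

theorem hyperbolicSum_equivalent_prod {K V : Type*} [Field K]
    [NeZero (2 : K)] [AddCommGroup V] [Module K V] (c : K) (b : LinearMap.BilinForm K V) :
    (hyperbolicSum c b).toQuadraticMap.Equivalent
      ((QuadraticMap.weightedSumSquares K ![c, 1 / 2, -1 / 2]).prod b.toQuadraticMap) :=
  -- `2 x₂ x₄ = (x₂ + x₄)² / 2 - (x₂ - x₄)² / 2`
  ⟨{  toFun := fun x ↦ (![x.1, x.2.1 + x.2.2.2, x.2.1 - x.2.2.2], x.2.2.1)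
      invFun := fun y ↦ (y.1 0, (y.1 1 + y.1 2) / 2, y.2, (y.1 1 - y.1 2) / 2)
      map_add' := fun x y ↦ by
        ext i <;> [fin_cases i; skip] <;> simp <;> ring
      map_smul' := fun r x ↦ by
        ext i <;> [fin_cases i; skip] <;> simp [mul_add, mul_sub]
      left_inv := fun x ↦ by simp [← two_mul, mul_div_cancel_left₀ _ (two_ne_zero (α := K))]
      right_inv := fun y ↦ by
        ext i <;> [fin_cases i; skip] <;> simp <;> field_simp <;> ring
      map_app' := fun x ↦ by
        simp only [QuadraticMap.prod_apply, QuadraticMap.weightedSumSquares_apply,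
          Fin.sum_univ_three, LinearMap.BilinMap.toQuadraticMap_apply, hyperbolicSum_apply,
          Matrix.cons_val, smul_eq_mul]
        field_simp
        ring }⟩

end QuadraticIsometry

section Signature

section Field

variable {𝕜 V W : Type*} [Field 𝕜] [LinearOrder 𝕜] [IsStrictOrderedRing 𝕜]
  [AddCommGroup V] [Module 𝕜 V] [AddCommGroup W] [Module 𝕜 W]

theorem sigNeg_prod [FiniteDimensional 𝕜 V] [FiniteDimensional 𝕜 W] (Q : QuadraticForm 𝕜 V)
    (Q' : QuadraticForm 𝕜 W) :
    sigNeg (Q.prod Q') = sigNeg Q + sigNeg Q' := by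
  have : Invertible (2 : 𝕜) := invertibleOfNonzero two_ne_zero
  obtain ⟨v, hv⟩ := Q.equivalent_weightedSumSquares
  obtain ⟨w, hw⟩ := Q'.equivalent_weightedSumSquares
  have hneg : {i | Sum.elim v w i < 0} = Sum.inl '' {i | v i < 0} ∪ Sum.inr '' {i | w i < 0} := by
    ext (i | i) <;> simp
  rw [((hv.prod hw).trans (weightedSumSquares_sumElim_equivalent_prod v w).symm).sigNeg_eq,
    hv.sigNeg_eq, hw.sigNeg_eq, QuadraticForm.sigNeg_weightedSumSquares,
    QuadraticForm.sigNeg_weightedSumSquares, QuadraticForm.sigNeg_weightedSumSquares, hneg,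
    Set.ncard_union_eq (by simp [Set.disjoint_left]),
    Set.ncard_image_of_injective _ Sum.inl_injective,
    Set.ncard_image_of_injective _ Sum.inr_injective]

theorem sigNeg_hyperbolicSum [FiniteDimensional 𝕜 V] {c : 𝕜} (hc : c < 0)
    (b : LinearMap.BilinForm 𝕜 V) :
    sigNeg (hyperbolicSum c b).toQuadraticMap = sigNeg b.toQuadraticMap + 2 := by
  have hneg : {i | (![c, 1 / 2, -1 / 2] : Fin 3 → 𝕜) i < 0} = {0, 2} := by
    ext i
    fin_cases i <;> simp [hc, neg_div]
  rw [(hyperbolicSum_equivalent_prod c b).sigNeg_eq, sigNeg_prod,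
    QuadraticForm.sigNeg_weightedSumSquares, hneg, Set.ncard_pair (by decide), add_comm]

end Field

theorem exists_equiv_mem_iff_of_ncard_eq {ι κ : Type*} [Finite ι] [Finite κ]
    (hcard : Nat.card ι = Nat.card κ) {s : Set ι} {t : Set κ} (h : s.ncard = t.ncard) :
    ∃ e : ι ≃ κ, ∀ i, e i ∈ t ↔ i ∈ s := by
  classical
  have hcompl : sᶜ.ncard = tᶜ.ncard := by
    have hs := s.ncard_add_ncard_compl
    have ht := t.ncard_add_ncard_compl
    omega
  obtain ⟨f⟩ : Nonempty (s ≃ t) := Finite.card_eq.1 h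
  obtain ⟨g⟩ : Nonempty (↥sᶜ ≃ ↥tᶜ) := Finite.card_eq.1 hcompl
  refine ⟨(Equiv.Set.sumCompl s).symm.trans ((f.sumCongr g).trans (Equiv.Set.sumCompl t)),
    fun i ↦ ?_⟩
  by_cases hi : i ∈ s
  · simp [Equiv.Set.sumCompl_symm_apply_of_mem hi, hi]
  · have hgi : (g ⟨i, hi⟩ : κ) ∉ t := (g ⟨i, hi⟩).2
    simp [Equiv.Set.sumCompl_symm_apply_of_notMem hi, hi, hgi]

theorem equivalent_of_finrank_eq_of_sigNeg_eq {V W : Type*} [AddCommGroup V] [Module ℝ V]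
    [FiniteDimensional ℝ V] [AddCommGroup W] [Module ℝ W] [FiniteDimensional ℝ W]
    {Q : QuadraticForm ℝ V} {Q' : QuadraticForm ℝ W}
    (hQ : (QuadraticMap.associated (R := ℝ) Q).SeparatingLeft)
    (hQ' : (QuadraticMap.associated (R := ℝ) Q').SeparatingLeft)
    (hrank : Module.finrank ℝ V = Module.finrank ℝ W) (hsig : sigNeg Q = sigNeg Q') :
    Q.Equivalent Q' := by
  obtain ⟨v, hv, hQv⟩ := Q.equivalent_one_neg_one_weighted_sum_squared hQ
  obtain ⟨w, hw, hQw⟩ := Q'.equivalent_one_neg_one_weighted_sum_squared hQ'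
  rw [hQv.sigNeg_eq, hQw.sigNeg_eq, QuadraticForm.sigNeg_weightedSumSquares,
    QuadraticForm.sigNeg_weightedSumSquares] at hsig
  obtain ⟨e, he⟩ := exists_equiv_mem_iff_of_ncard_eq (by simpa using hrank) hsig
  have hwe : w ∘ e = v := by
    funext i
    have hsign : w (e i) < 0 ↔ v i < 0 := he i
    have hvi := hv i
    have hwi := hw (e i)
    grind
  have hwv := weightedSumSquares_equivalent_comp_equiv w e
  rw [hwe] at hwv
  exact hQv.trans (hwv.symm.trans hQw.symm)

theorem nonempty_isometryEquiv_of_sigNeg_eq {V W : Type*} [AddCommGroup V] [Module ℝ V]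
    [FiniteDimensional ℝ V] [AddCommGroup W] [Module ℝ W] [FiniteDimensional ℝ W]
    {b : LinearMap.BilinForm ℝ V} {b' : LinearMap.BilinForm ℝ W}
    (hb : b.IsSymm) (hb' : b'.IsSymm) (hsep : b.SeparatingLeft) (hsep' : b'.SeparatingLeft)
    (hrank : Module.finrank ℝ V = Module.finrank ℝ W)
    (hsig : sigNeg b.toQuadraticMap = sigNeg b'.toQuadraticMap) :
    Nonempty (b.IsometryEquiv b') := by
  refine nonempty_isometryEquiv_of_equivalent_toQuadraticMap hb hb'
    (equivalent_of_finrank_eq_of_sigNeg_eq ?_ ?_ hrank hsig)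
  · rwa [QuadraticMap.associated_left_inverse ℝ hb.eq]
  · rwa [QuadraticMap.associated_left_inverse ℝ hb'.eq]

end Signature

section SigForm

/-- The form `formSig k m` as a bundled bilinear form, to which the theory of signatures applies. -/
def sigForm (k m : ℕ) : LinearMap.BilinForm ℝ (Fin m → ℝ) :=
  Matrix.toBilin' (Matrix.diagonal fun i : Fin m ↦ if (i : ℕ) < k then -1 else 1)

theorem sigForm_apply (k m : ℕ) (x y : Fin m → ℝ) : sigForm k m x y = formSig k m x y := by
  simp only [sigForm, Matrix.toBilin'_apply', Matrix.mulVec_diagonal, dotProduct, formSig]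
  exact Finset.sum_congr rfl fun i _ ↦ by split_ifs <;> ring

theorem isSymm_sigForm (k m : ℕ) : (sigForm k m).IsSymm := by
  refine ⟨fun x y ↦ ?_⟩
  simp only [sigForm_apply, formSig, mul_comm]

theorem separatingLeft_sigForm (k m : ℕ) : (sigForm k m).SeparatingLeft := by
  refine (LinearMap.BilinForm.nondegenerate_toBilin'_iff_det_ne_zero.2 ?_).1
  rw [Matrix.det_diagonal, Finset.prod_ne_zero_iff]
  intro i _
  split_ifs <;> norm_num

theorem toQuadraticMap_sigForm (k m : ℕ) : (sigForm k m).toQuadraticMap =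
    QuadraticMap.weightedSumSquares ℝ fun i : Fin m ↦ if (i : ℕ) < k then (-1 : ℝ) else 1 := by
  ext x
  simp [sigForm_apply, formSig, QuadraticMap.weightedSumSquares_apply]

theorem sigNeg_sigForm (k m : ℕ) : sigNeg (sigForm k m).toQuadraticMap = min k m := by
  have hneg : {i : Fin m | (if (i : ℕ) < k then (-1 : ℝ) else 1) < 0} =
      {i : Fin m | (i : ℕ) < k} := by
    ext i
    by_cases hi : (i : ℕ) < k <;> simp [hi]
  rw [toQuadraticMap_sigForm, QuadraticForm.sigNeg_weightedSumSquares, hneg,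
    Set.ncard_eq_toFinset_card']
  simp [Fin.card_filter_val_lt, min_comm]

theorem nonempty_isometryEquiv_sigForm_of_hyperbolicSum {V : Type*} [AddCommGroup V] [Module ℝ V]
    [FiniteDimensional ℝ V] {b : LinearMap.BilinForm ℝ V} (hb : b.IsSymm) {c : ℝ} (hc : c < 0)
    {k m : ℕ} (ψ : (hyperbolicSum c b).IsometryEquiv (sigForm (k + 2) (m + 3))) :
    Nonempty ((sigForm k m).IsometryEquiv b) := by
  have hsep : b.SeparatingLeft := separatingLeft_of_hyperbolicSum <|
    separatingLeft_of_isometryEquiv ψ (separatingLeft_sigForm _ _)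
  have hrank : Module.finrank ℝ V = m := by
    have := ψ.toLinearEquiv.finrank_eq
    simp only [Module.finrank_prod, Module.finrank_self, Module.finrank_fin_fun] at this
    omega
  have hsig : sigNeg b.toQuadraticMap = min k m := by
    have hadd : sigNeg b.toQuadraticMap + 2 = min (k + 2) (m + 3) := by
      rw [← sigNeg_hyperbolicSum hc, ← sigNeg_sigForm,
        (equivalent_toQuadraticMap_of_isometryEquiv ψ).sigNeg_eq]
    have hle : sigNeg b.toQuadraticMap ≤ m := by
      rw [← hrank, ← sigPos_neg]
      exact sigPos_le_finrank _
    omega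
  exact nonempty_isometryEquiv_of_sigNeg_eq (isSymm_sigForm k m) hb (separatingLeft_sigForm k m)
    hsep (by rw [hrank, Module.finrank_fin_fun]) (by rw [hsig, sigNeg_sigForm])

theorem exists_isometryEquiv_hyperbolicSum_sigForm {k m : ℕ} {I X : Fin (m + 3) → ℝ} (hI : I ≠ 0)
    (hII : sigForm (k + 2) (m + 3) I I = 0) (hXX : sigForm (k + 2) (m + 3) X X < 0)
    (hXI : sigForm (k + 2) (m + 3) X I = 0) :
    ∃ ψ : (hyperbolicSum (sigForm (k + 2) (m + 3) X X) (sigForm k m)).IsometryEquiv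
        (sigForm (k + 2) (m + 3)), ψ (1, 0, 0, 0) = X ∧ ψ (0, 1, 0, 0) = I := by
  have hΦ := isSymm_sigForm (k + 2) (m + 3)
  obtain ⟨J, hJ⟩ := exists_isWittFrame hΦ (separatingLeft_sigForm _ _) hXX.ne hI hII hXI
  obtain ⟨e⟩ := nonempty_isometryEquiv_sigForm_of_hyperbolicSum (hΦ.restrict _) hXX
    (hJ.isometryEquiv hΦ)
  have happly (x) : (hyperbolicSumCongr _ e).trans (hJ.isometryEquiv hΦ) x =
      x.1 • X + x.2.1 • I + (e x.2.2.1 : Fin (m + 3) → ℝ) + x.2.2.2 • J := rfl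
  exact ⟨(hyperbolicSumCongr _ e).trans (hJ.isometryEquiv hΦ), by simp [happly], by simp [happly]⟩

end SigForm

section Stabilizer

theorem nonempty_mulEquiv_of_mem_iff_mem_range {G M : Type*} [Group G] [Monoid M] {f : G →* M}
    (hf : Function.Injective f) {H : Subgroup Mˣ} (hH : ∀ a : Mˣ, a ∈ H ↔ (a : M) ∈ Set.range f) :
    Nonempty (H ≃* G) := by
  have hinj : Function.Injective f.toHomUnits := fun x y hxy ↦ hf (congrArg Units.val hxy)
  have hrange : f.toHomUnits.range = H := by
    ext a
    rw [hH]
    exact ⟨fun ⟨x, hx⟩ ↦ ⟨x, congrArg Units.val hx⟩, fun ⟨x, hx⟩ ↦ ⟨x, Units.ext hx⟩⟩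
  exact ⟨((MonoidHom.ofInjective hinj).trans (MulEquiv.subgroupCongr hrange)).symm⟩

theorem mem_specialIsometry_iff {k m : ℕ} {A : (Matrix (Fin m) (Fin m) ℝ)ˣ} :
    A ∈ specialIsometry k m ↔
      A.1.det = 1 ∧ (sigForm k m).IsOrthogonal (Matrix.toLin' A.1) := by
  simp only [LinearMap.IsOrthogonal, sigForm_apply, Matrix.toLin'_apply]
  rfl

variable (k m : ℕ)

/-- The homomorphism `(v, A) ↦ siegelMap v A` from the semidirect product `ℝ^m ⋊ SO(k, m - k)`. -/
noncomputable def siegelHom : SemidirectProduct (Multiplicative (Fin m → ℝ)) (specialIsometry k m)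
    (subgroupMulVecHom (specialIsometry k m)) →* Module.End ℝ (ℝ × ℝ × (Fin m → ℝ) × ℝ) where
  toFun p := siegelMap (sigForm k m) p.left.toAdd (Matrix.toLin' p.right.1.1)
  map_one' := by
    rw [SemidirectProduct.one_left, SemidirectProduct.one_right, toAdd_one]
    exact (congrArg _ Matrix.toLin'_one).trans siegelMap_zero_one
  map_mul' p q := by
    rw [siegelMap_mul (isSymm_sigForm k m) _ _ (mem_specialIsometry_iff.1 p.right.2).2,
      SemidirectProduct.mul_left, SemidirectProduct.mul_right, toAdd_mul, Subgroup.coe_mul,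
      Units.val_mul, Matrix.toLin'_mul]
    rfl

theorem siegelHom_apply (p) :
    siegelHom k m p = siegelMap (sigForm k m) p.left.toAdd (Matrix.toLin' p.right.1.1) :=
  rfl

theorem siegelHom_injective : Function.Injective (siegelHom k m) := by
  intro p q hpq
  obtain ⟨hleft, hright⟩ := siegelMap_inj.1 hpq
  exact SemidirectProduct.ext hleft
    (Subtype.ext (Units.ext (Matrix.toLin'.injective hright)))

variable {k m}

theorem mem_range_siegelHom_iff {c : ℝ} (hc : c ≠ 0) {S : Module.End ℝ (ℝ × ℝ × (Fin m → ℝ) × ℝ)} :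
    S ∈ Set.range (siegelHom k m) ↔ LinearMap.det S = 1 ∧
      (hyperbolicSum c (sigForm k m)).IsOrthogonal S ∧
      S (1, 0, 0, 0) = (1, 0, 0, 0) ∧ S (0, 1, 0, 0) = (0, 1, 0, 0) := by
  have hsymm := isSymm_sigForm k m
  constructor
  · rintro ⟨p, rfl⟩
    refine ⟨?_, isOrthogonal_siegelMap hsymm c _
      (mem_specialIsometry_iff.1 p.right.2).2, ?_, ?_⟩
    · rw [siegelHom_apply, det_siegelMap hsymm, LinearMap.det_toLin']
      exact p.right.2.1
    · simp [siegelHom_apply, siegelMap_apply]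
    · simp [siegelHom_apply, siegelMap_apply]
  · rintro ⟨hdet, horth, hfix₁, hfix₂⟩
    obtain ⟨v, g, hg, rfl⟩ := exists_eq_siegelMap (mul_right_injective₀ hc) horth hfix₁ hfix₂
    rw [det_siegelMap hsymm] at hdet
    have hdet' : (LinearMap.toMatrix' g).det = 1 := by rw [LinearMap.det_toMatrix', hdet]
    let A : (Matrix (Fin m) (Fin m) ℝ)ˣ :=
      Matrix.nonsingInvUnit (LinearMap.toMatrix' g) (hdet' ▸ isUnit_one)
    have hA : Matrix.toLin' A.1 = g := Matrix.toLin'_toMatrix' g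
    have hA_mem : A ∈ specialIsometry k m := mem_specialIsometry_iff.2 ⟨hdet', hA ▸ hg⟩
    exact ⟨⟨.ofAdd v, ⟨A, hA_mem⟩⟩, by rw [siegelHom_apply, toAdd_ofAdd, hA]⟩

theorem nonempty_stabilizer_mulEquiv {k m k' n : ℕ} {c : ℝ} (hc : c ≠ 0)
    (ψ : (hyperbolicSum c (sigForm k m)).IsometryEquiv (sigForm k' n)) {I X : Fin n → ℝ}
    (hX : ψ (1, 0, 0, 0) = X) (hI : ψ (0, 1, 0, 0) = I) :
    Nonempty (↥(specialIsometry k' n ⊓ vecStab n I ⊓ vecStab n X) ≃*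
      SemidirectProduct (Multiplicative (Fin m → ℝ)) (specialIsometry k m)
        (subgroupMulVecHom (specialIsometry k m))) := by
  let Ψ := (ψ.toLinearEquiv.conjAlgEquiv ℝ).trans LinearMap.toMatrixAlgEquiv'
  have hΨ (S) : Matrix.toLin' (Ψ S) = ψ.toLinearEquiv.conj S :=
    Matrix.toLin'_toMatrix' (ψ.toLinearEquiv.conj S)
  have hΨ_apply (S x) : Matrix.toLin' (Ψ S) (ψ x) = ψ (S x) := by
    rw [hΨ]
    exact congrArg (ψ <| S ·) (ψ.toLinearEquiv.symm_apply_apply x)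
  have hfix (S x) : (Ψ S).mulVec (ψ x) = ψ x ↔ S x = x := by
    rw [← Matrix.toLin'_apply, hΨ_apply, (EquivLike.injective ψ).eq_iff]
  have hdet (S) : (Ψ S).det = LinearMap.det S := by
    rw [← LinearMap.det_toLin', hΨ]
    exact LinearMap.det_conj S ψ.toLinearEquiv
  have horth (S) : (sigForm k' n).IsOrthogonal (Matrix.toLin' (Ψ S)) ↔
      (hyperbolicSum c (sigForm k m)).IsOrthogonal S := by
    simp only [LinearMap.IsOrthogonal, (EquivLike.surjective ψ).forall, hΨ_apply, ψ.map_app]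
  refine nonempty_mulEquiv_of_mem_iff_mem_range (f := (Ψ : _ →* _).comp (siegelHom k m))
    (Ψ.injective.comp (siegelHom_injective k m)) fun A ↦ ?_
  obtain ⟨S, hS⟩ := Ψ.surjective A
  have hrange : (A : Matrix (Fin n) (Fin n) ℝ) ∈ Set.range ((Ψ : _ →* _).comp (siegelHom k m)) ↔
      S ∈ Set.range (siegelHom k m) := by
    simp [← hS]
  have hmem_vecStab (x) : A ∈ vecStab n (ψ x) ↔ S x = x := by
    rw [← hfix, hS]
    rfl
  rw [hrange, mem_range_siegelHom_iff hc, Subgroup.mem_inf, Subgroup.mem_inf,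
    mem_specialIsometry_iff, ← hS, hdet, horth, ← hX, ← hI, hmem_vecStab, hmem_vecStab]
  tauto

end Stabilizer

theorem stabilizer_of_Ti_point_iso_general (k m : ℕ) (I X : Fin (m + 3) → ℝ) (hI : I ≠ 0)
    (hII : formSig (k + 2) (m + 3) I I = 0) (hXX : formSig (k + 2) (m + 3) X X < 0)
    (hIX : formSig (k + 2) (m + 3) I X = 0) :
    Nonempty (↥(specialIsometry (k + 2) (m + 3) ⊓ vecStab (m + 3) I ⊓ vecStab (m + 3) X) ≃*
      SemidirectProduct (Multiplicative (Fin m → ℝ)) (specialIsometry k m)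
        (subgroupMulVecHom (specialIsometry k m))) := by
  rw [← sigForm_apply] at hII hXX hIX
  rw [(isSymm_sigForm _ _).eq] at hIX
  obtain ⟨ψ, hψX, hψI⟩ := exists_isometryEquiv_hyperbolicSum_sigForm hI hII hXX hIX
  exact nonempty_stabilizer_mulEquiv hXX.ne ψ hψX hψI

/-- For `n ≥ 3` and any `X` in the flat-model orbit `Ti^n = M_{-1,0}`, the stabilizer of
`X` in the Poincaré subgroup `G` is isomorphic, as a group, to the semidirect product
`ℝ^{n-1} ⋊ SO(n-1)`, where `SO(n-1)` is the group of matrices of determinant one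
preserving the standard Euclidean inner product `formSig 0 (n-1)` of `ℝ^{n-1}`, acting
by matrix–vector multiplication. -/
theorem stabilizer_of_Ti_point_iso
    (n : ℕ) (hn : 3 ≤ n) (I : Fin (n + 2) → ℝ) (hI : I ≠ 0)
    (hII : formSig 2 (n + 2) I I = 0)
    (X : Fin (n + 2) → ℝ) (hX : X ∈ Mset n I (-1) 0) :
    Nonempty ((↥(poincareGroup n I ⊓ vecStab (n + 2) X)) ≃*
      SemidirectProduct (Multiplicative (Fin (n - 1) → ℝ))
        (↥(specialIsometry 0 (n - 1)))
        (subgroupMulVecHom (specialIsometry 0 (n - 1)))) := by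
  obtain ⟨m, rfl⟩ : ∃ m, n = m + 1 := ⟨n - 1, by omega⟩
  exact stabilizer_of_Ti_point_iso_general 0 m I X hI hII (hX.1.trans_lt neg_one_lt_zero) hX.2.1
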